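/- For every b ∈ [0, 1/2], the A-effective energy 𝓔_b is non-increasing on [R₀,∞); in particular 𝓔_b(R) ≤ 𝓔_b(R₀) for all R ≥ R₀. -/

import Mathlib

/-!
The energy density `e`, the flux `F` and the dissipation `D` below satisfy the local balance law
`∂_R e = ∂_θ F - D` along solutions of the Gowdy equations. Integrating over a period removes the
flux, and `D` is a combination of squares whose coefficients are nonnegative exactly for
`0 ≤ b ≤ 1/2`.
-/

open Real MeasureTheory Set

/-- Partial derivative with respect to the first (time) variable `R`. -/
noncomputable def pdR (f : ℝ → ℝ → ℝ) (R θ : ℝ) : ℝ := deriv (fun r => f r θ) R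

/-- Partial derivative with respect to the second (space) variable `θ`. -/
noncomputable def pdT (f : ℝ → ℝ → ℝ) (R θ : ℝ) : ℝ := deriv (fun t => f R t) θ

section PartialDerivatives

open Filter Function
open scoped Topology ContDiff

variable {f : ℝ → ℝ → ℝ} {R θ T : ℝ} {m n : ℕ∞ω}

lemma pdR_eq_fderiv (hf : DifferentiableAt ℝ (uncurry f) (R, θ)) :
    pdR f R θ = fderiv ℝ (uncurry f) (R, θ) (1, 0) := by
  have hline : HasDerivAt (fun r : ℝ => (r, θ)) (1, 0) R :=
    (hasDerivAt_id R).prodMk (hasDerivAt_const R θ)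
  exact (hf.hasFDerivAt.comp_hasDerivAt R hline).deriv

lemma pdT_eq_fderiv (hf : DifferentiableAt ℝ (uncurry f) (R, θ)) :
    pdT f R θ = fderiv ℝ (uncurry f) (R, θ) (0, 1) := by
  have hline : HasDerivAt (fun t : ℝ => (R, t)) (0, 1) θ :=
    (hasDerivAt_const θ R).prodMk (hasDerivAt_id θ)
  exact (hf.hasFDerivAt.comp_hasDerivAt θ hline).deriv

lemma hasDerivAt_pdR (hf : DifferentiableAt ℝ (uncurry f) (R, θ)) :
    HasDerivAt (fun r => f r θ) (pdR f R θ) R :=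
  DifferentiableAt.hasDerivAt <|
    DifferentiableAt.comp (g := uncurry f) (f := fun r : ℝ => (r, θ)) R hf (by fun_prop)

lemma hasDerivAt_pdT (hf : DifferentiableAt ℝ (uncurry f) (R, θ)) :
    HasDerivAt (fun t => f R t) (pdT f R θ) θ :=
  DifferentiableAt.hasDerivAt <|
    DifferentiableAt.comp (g := uncurry f) (f := fun t : ℝ => (R, t)) θ hf (by fun_prop)

lemma uncurry_pdR_eventuallyEq (hf : ContDiffAt ℝ 1 (uncurry f) (R, θ)) :
    uncurry (pdR f) =ᶠ[𝓝 (R, θ)] fun p => fderiv ℝ (uncurry f) p (1, 0) := by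
  filter_upwards [hf.eventually (by simp)] with p hp
  exact pdR_eq_fderiv (hp.differentiableAt one_ne_zero)

lemma uncurry_pdT_eventuallyEq (hf : ContDiffAt ℝ 1 (uncurry f) (R, θ)) :
    uncurry (pdT f) =ᶠ[𝓝 (R, θ)] fun p => fderiv ℝ (uncurry f) p (0, 1) := by
  filter_upwards [hf.eventually (by simp)] with p hp
  exact pdT_eq_fderiv (hp.differentiableAt one_ne_zero)

lemma contDiffAt_pdR (hf : ContDiffAt ℝ n (uncurry f) (R, θ)) (hmn : m + 1 ≤ n) :
    ContDiffAt ℝ m (uncurry (pdR f)) (R, θ) :=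
  ((hf.fderiv_right hmn).clm_apply contDiffAt_const).congr_of_eventuallyEq
    (uncurry_pdR_eventuallyEq (hf.of_le (le_add_self.trans hmn)))

lemma contDiffAt_pdT (hf : ContDiffAt ℝ n (uncurry f) (R, θ)) (hmn : m + 1 ≤ n) :
    ContDiffAt ℝ m (uncurry (pdT f)) (R, θ) :=
  ((hf.fderiv_right hmn).clm_apply contDiffAt_const).congr_of_eventuallyEq
    (uncurry_pdT_eventuallyEq (hf.of_le (le_add_self.trans hmn)))

lemma differentiableAt_pdR (hf : ContDiffAt ℝ 2 (uncurry f) (R, θ)) :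
    DifferentiableAt ℝ (uncurry (pdR f)) (R, θ) :=
  (contDiffAt_pdR hf one_add_one_eq_two.le).differentiableAt one_ne_zero

lemma differentiableAt_pdT (hf : ContDiffAt ℝ 2 (uncurry f) (R, θ)) :
    DifferentiableAt ℝ (uncurry (pdT f)) (R, θ) :=
  (contDiffAt_pdT hf one_add_one_eq_two.le).differentiableAt one_ne_zero

lemma pdR_pdT_comm (hf : ContDiffAt ℝ 2 (uncurry f) (R, θ)) :
    pdR (pdT f) R θ = pdT (pdR f) R θ := by
  have hf₁ : ContDiffAt ℝ 1 (uncurry f) (R, θ) := hf.of_le one_le_two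
  have hdf : DifferentiableAt ℝ (fderiv ℝ (uncurry f)) (R, θ) :=
    (hf.fderiv_right one_add_one_eq_two.le).differentiableAt one_ne_zero
  have hsymm : IsSymmSndFDerivAt ℝ (uncurry f) (R, θ) := hf.isSymmSndFDerivAt (by simp)
  rw [pdR_eq_fderiv (differentiableAt_pdT hf), pdT_eq_fderiv (differentiableAt_pdR hf),
    (uncurry_pdT_eventuallyEq hf₁).fderiv_eq, (uncurry_pdR_eventuallyEq hf₁).fderiv_eq,
    fderiv_clm_apply hdf (differentiableAt_const _),
    fderiv_clm_apply hdf (differentiableAt_const _)]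
  simpa using hsymm (1, 0) (0, 1)

lemma periodic_pdR (hf : ∀ᶠ r in 𝓝 R, Periodic (f r) T) : Periodic (pdR f R) T := fun θ =>
  EventuallyEq.deriv_eq (hf.mono fun _ hr => hr θ)

lemma periodic_pdT (hf : Periodic (f R) T) : Periodic (pdT f R) T := fun θ => by
  simpa only [pdT, hf _] using (deriv_comp_add_const (f R) T θ).symm

end PartialDerivatives

section BalanceLaws

open Filter Function
open scoped Topology

lemma integral_deriv_eq_zero_of_periodic {E : Type*} [NormedAddCommGroup E] [NormedSpace ℝ E]
    [CompleteSpace E] {g : ℝ → E} {T : ℝ} (hg : ContDiff ℝ 1 g) (hT : Periodic g T) (a : ℝ) :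
    ∫ x in a..a + T, deriv g x = 0 := by
  rw [intervalIntegral.integral_deriv_eq_sub (fun x _ => hg.differentiable one_ne_zero x)
    (hg.continuous_deriv_one.intervalIntegrable _ _), hT a, sub_self]

lemma hasDerivAt_integral_pdR {f : ℝ → ℝ → ℝ} {R a b : ℝ}
    (hf : ∀ θ ∈ uIcc a b, ContDiffAt ℝ 1 (uncurry f) (R, θ)) :
    HasDerivAt (fun r => ∫ θ in a..b, f r θ) (∫ θ in a..b, pdR f R θ) R := by
  have hnear : ∀ᶠ r in 𝓝 R, ∀ θ ∈ uIcc a b, ContDiffAt ℝ 1 (uncurry f) (r, θ) :=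
    isCompact_uIcc.eventually_forall_of_forall_eventually fun θ hθ => (hf θ hθ).eventually (by simp)
  obtain ⟨ε, hε, hball⟩ := Metric.nhds_basis_closedBall.eventually_iff.1 hnear
  have hslice : ∀ r ∈ Metric.closedBall R ε, IntervalIntegrable (f r) volume a b := fun r hr =>
    ContinuousOn.intervalIntegrable fun θ hθ =>
      (hasDerivAt_pdT ((hball hr θ hθ).differentiableAt one_ne_zero)).continuousAt
        |>.continuousWithinAt
  have hcont : ContinuousOn (uncurry (pdR f)) (Metric.closedBall R ε ×ˢ uIcc a b) :=
    fun p hp => (contDiffAt_pdR (m := 0) (hball hp.1 p.2 hp.2) (by simp)).continuousAt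
      |>.continuousWithinAt
  have hcontR : ContinuousOn (pdR f R) (uIcc a b) :=
    hcont.comp (by fun_prop : ContinuousOn (fun θ : ℝ => (R, θ)) _)
      fun θ hθ => ⟨Metric.mem_closedBall_self hε.le, hθ⟩
  obtain ⟨C, hC⟩ :=
    ((isCompact_closedBall R ε).prod isCompact_uIcc).exists_bound_of_continuousOn hcont
  refine (intervalIntegral.hasDerivAt_integral_of_dominated_loc_of_deriv_le (bound := fun _ => C)
    (Metric.closedBall_mem_nhds R hε) ?_ (hslice R (Metric.mem_closedBall_self hε.le))
    hcontR.intervalIntegrable.def'.aestronglyMeasurable ?_ intervalIntegrable_const ?_).2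
  · filter_upwards [Metric.closedBall_mem_nhds R hε] with r hr
    exact (hslice r hr).def'.aestronglyMeasurable
  · exact .of_forall fun θ hθ r hr => hC (r, θ) ⟨hr, uIoc_subset_uIcc hθ⟩
  · exact .of_forall fun θ hθ r hr =>
      hasDerivAt_pdR ((hball hr θ (uIoc_subset_uIcc hθ)).differentiableAt one_ne_zero)

lemma antitoneOn_integral_of_pdR_le_pdT {e F : ℝ → ℝ → ℝ} {R₀ T : ℝ} (hT : 0 ≤ T)
    (he : ∀ R, R₀ ≤ R → ∀ θ, ContDiffAt ℝ 1 (uncurry e) (R, θ))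
    (hF : ∀ R, R₀ < R → ContDiff ℝ 1 (F R)) (hper : ∀ R, R₀ < R → Periodic (F R) T)
    (hle : ∀ R, R₀ < R → ∀ θ, pdR e R θ ≤ pdT F R θ) :
    AntitoneOn (fun R => ∫ θ in (0 : ℝ)..T, e R θ) (Ici R₀) := by
  have hderiv : ∀ R, R₀ ≤ R →
      HasDerivAt (fun r => ∫ θ in (0 : ℝ)..T, e r θ) (∫ θ in (0 : ℝ)..T, pdR e R θ) R :=
    fun R hR => hasDerivAt_integral_pdR fun θ _ => he R hR θ
  have hnonpos : ∀ R, R₀ < R → ∫ θ in (0 : ℝ)..T, pdR e R θ ≤ 0 := fun R hR => by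
    have hcont : Continuous (pdR e R) := continuous_iff_continuousAt.2 fun θ =>
      (contDiffAt_pdR (m := 0) (he R hR.le θ) (by simp)).continuousAt.comp
        (by fun_prop : ContinuousAt (fun t : ℝ => (R, t)) θ)
    calc ∫ θ in (0 : ℝ)..T, pdR e R θ
        ≤ ∫ θ in (0 : ℝ)..T, deriv (F R) θ :=
          intervalIntegral.integral_mono hT (hcont.intervalIntegrable _ _)
            ((hF R hR).continuous_deriv_one.intervalIntegrable _ _) (hle R hR)
      _ = 0 := by simpa using integral_deriv_eq_zero_of_periodic (hF R hR) (hper R hR) 0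
  refine antitoneOn_of_hasDerivWithinAt_nonpos (convex_Ici R₀)
    (fun R hR => (hderiv R hR).continuousAt.continuousWithinAt)
    (fun R hR => (hderiv R (interior_subset hR)).hasDerivWithinAt) fun R hR => hnonpos R ?_
  rwa [interior_Ici] at hR

end BalanceLaws

/-- The Gowdy wave equations for `(U, A)` at the point `(R, θ)`. -/
structure IsGowdySolutionAt (U A : ℝ → ℝ → ℝ) (R θ : ℝ) : Prop where
  wave_U : deriv (fun r => r * pdR U r θ) R - deriv (fun t => R * pdT U R t) θ
    = exp (4 * U R θ) / (2 * R) * ((pdR A R θ) ^ 2 - (pdT A R θ) ^ 2)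
  wave_A : deriv (fun r => r⁻¹ * pdR A r θ) R - deriv (fun t => R⁻¹ * pdT A R t) θ
    = 4 / R * (-(pdR U R θ * pdR A R θ) + pdT U R θ * pdT A R θ)

/-- The integrand of the `A`-effective energy `𝓔_b`. -/
noncomputable def energyDensity (b : ℝ) (U A : ℝ → ℝ → ℝ) (R θ : ℝ) : ℝ :=
  (pdR U R θ - b / R) ^ 2 + (pdT U R θ) ^ 2
    + exp (4 * U R θ) / (4 * R ^ 2) * ((pdR A R θ) ^ 2 + (pdT A R θ) ^ 2)

/-- The flux through the `θ`-direction in the balance law for `energyDensity`. -/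
noncomputable def energyFlux (b : ℝ) (U A : ℝ → ℝ → ℝ) (R θ : ℝ) : ℝ :=
  2 * (pdR U R θ - b / R) * pdT U R θ
    + exp (4 * U R θ) / (2 * R ^ 2) * (pdR A R θ * pdT A R θ)

/-- The rate at which `energyDensity` is lost, per unit of `R`, in its balance law. -/
noncomputable def energyDissipation (b : ℝ) (U A : ℝ → ℝ → ℝ) (R θ : ℝ) : ℝ :=
  2 / R * (pdR U R θ - b / R) ^ 2
    + exp (4 * U R θ) / (2 * R ^ 3)
      * (2 * b * (pdR A R θ) ^ 2 + (1 - 2 * b) * (pdT A R θ) ^ 2)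

/-- The `A`-effective energy `𝓔_b(R)` on the circle of length `T`. -/
noncomputable def effectiveEnergy (T b : ℝ) (U A : ℝ → ℝ → ℝ) (R : ℝ) : ℝ :=
  ∫ θ in (0 : ℝ)..T, energyDensity b U A R θ

section GowdyEnergy

open Filter Function
open scoped Topology

variable {U A : ℝ → ℝ → ℝ} {b R θ T : ℝ}

lemma IsGowdySolutionAt.pdR_pdR_U (h : IsGowdySolutionAt U A R θ) (hR : R ≠ 0)
    (hU : ContDiffAt ℝ 2 (uncurry U) (R, θ)) :
    pdR (pdR U) R θ = pdT (pdT U) R θ - pdR U R θ / R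
      + exp (4 * U R θ) / (2 * R ^ 2) * ((pdR A R θ) ^ 2 - (pdT A R θ) ^ 2) := by
  have hUR := hasDerivAt_pdR (differentiableAt_pdR hU)
  have hUT := hasDerivAt_pdT (differentiableAt_pdT hU)
  have hwave := h.wave_U
  rw [((hasDerivAt_id' R).fun_mul hUR).deriv, (hUT.const_mul R).deriv] at hwave
  field_simp at hwave ⊢
  linarith

lemma IsGowdySolutionAt.pdR_pdR_A (h : IsGowdySolutionAt U A R θ) (hR : R ≠ 0)
    (hA : ContDiffAt ℝ 2 (uncurry A) (R, θ)) :
    pdR (pdR A) R θ = pdT (pdT A) R θ + pdR A R θ / R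
      + 4 * (-(pdR U R θ * pdR A R θ) + pdT U R θ * pdT A R θ) := by
  have hAR := hasDerivAt_pdR (differentiableAt_pdR hA)
  have hAT := hasDerivAt_pdT (differentiableAt_pdT hA)
  have hwave := h.wave_A
  rw [((hasDerivAt_inv hR).fun_mul hAR).deriv, (hAT.const_mul R⁻¹).deriv] at hwave
  field_simp at hwave ⊢
  linarith

lemma contDiffAt_energyDensity (hR : R ≠ 0) (hU : ContDiffAt ℝ 2 (uncurry U) (R, θ))
    (hA : ContDiffAt ℝ 2 (uncurry A) (R, θ)) :
    ContDiffAt ℝ 1 (uncurry (energyDensity b U A)) (R, θ) := by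
  have hU₁ : ContDiffAt ℝ 1 (uncurry U) (R, θ) := hU.of_le one_le_two
  have hUR : ContDiffAt ℝ 1 (uncurry (pdR U)) (R, θ) := contDiffAt_pdR hU one_add_one_eq_two.le
  have hUT : ContDiffAt ℝ 1 (uncurry (pdT U)) (R, θ) := contDiffAt_pdT hU one_add_one_eq_two.le
  have hAR : ContDiffAt ℝ 1 (uncurry (pdR A)) (R, θ) := contDiffAt_pdR hA one_add_one_eq_two.le
  have hAT : ContDiffAt ℝ 1 (uncurry (pdT A)) (R, θ) := contDiffAt_pdT hA one_add_one_eq_two.le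
  have hfst : ContDiffAt ℝ 1 (Prod.fst : ℝ × ℝ → ℝ) (R, θ) := contDiffAt_fst
  exact (((hUR.sub (contDiffAt_const.div hfst hR)).pow 2).add (hUT.pow 2)).add
    (((contDiffAt_const.mul hU₁).exp.div (contDiffAt_const.mul (hfst.pow 2))
      (by positivity)).mul ((hAR.pow 2).add (hAT.pow 2)))

lemma contDiffAt_energyFlux (hU : ContDiffAt ℝ 2 (uncurry U) (R, θ))
    (hA : ContDiffAt ℝ 2 (uncurry A) (R, θ)) :
    ContDiffAt ℝ 1 (energyFlux b U A R) θ := by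
  have hline : ContDiffAt ℝ 1 (fun t : ℝ => (R, t)) θ := by fun_prop
  have hU₁ : ContDiffAt ℝ 1 (U R) θ := (hU.of_le one_le_two).comp θ hline
  have hUR : ContDiffAt ℝ 1 (pdR U R) θ :=
    (contDiffAt_pdR hU one_add_one_eq_two.le).comp θ hline
  have hUT : ContDiffAt ℝ 1 (pdT U R) θ :=
    (contDiffAt_pdT hU one_add_one_eq_two.le).comp θ hline
  have hAR : ContDiffAt ℝ 1 (pdR A R) θ :=
    (contDiffAt_pdR hA one_add_one_eq_two.le).comp θ hline
  have hAT : ContDiffAt ℝ 1 (pdT A R) θ :=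
    (contDiffAt_pdT hA one_add_one_eq_two.le).comp θ hline
  unfold energyFlux
  fun_prop

lemma periodic_energyFlux (hU : ∀ᶠ r in 𝓝 R, Periodic (U r) T)
    (hA : ∀ᶠ r in 𝓝 R, Periodic (A r) T) : Periodic (energyFlux b U A R) T := fun θ => by
  simp only [energyFlux, hU.self_of_nhds θ, periodic_pdR hU θ, periodic_pdR hA θ,
    periodic_pdT hU.self_of_nhds θ, periodic_pdT hA.self_of_nhds θ]

lemma pdR_energyDensity (hR : R ≠ 0) (hU : ContDiffAt ℝ 2 (uncurry U) (R, θ))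
    (hA : ContDiffAt ℝ 2 (uncurry A) (R, θ)) :
    pdR (energyDensity b U A) R θ =
      2 * (pdR U R θ - b / R) * (pdR (pdR U) R θ + b / R ^ 2)
        + 2 * pdT U R θ * pdR (pdT U) R θ
        + exp (4 * U R θ) / (4 * R ^ 2)
          * ((4 * pdR U R θ - 2 / R) * ((pdR A R θ) ^ 2 + (pdT A R θ) ^ 2)
            + 2 * pdR A R θ * pdR (pdR A) R θ + 2 * pdT A R θ * pdR (pdT A) R θ) := by
  have hU' := hasDerivAt_pdR (hU.differentiableAt two_ne_zero)
  have hUR := hasDerivAt_pdR (differentiableAt_pdR hU)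
  have hUT := hasDerivAt_pdR (differentiableAt_pdT hU)
  have hAR := hasDerivAt_pdR (differentiableAt_pdR hA)
  have hAT := hasDerivAt_pdR (differentiableAt_pdT hA)
  have hshift := hUR.fun_sub ((hasDerivAt_const R b).fun_div (hasDerivAt_id' R) hR)
  have hweight := (hU'.const_mul 4).exp.fun_div (((hasDerivAt_id' R).fun_pow 2).const_mul 4)
    (by positivity)
  refine ((((hshift.fun_pow 2).fun_add (hUT.fun_pow 2)).fun_add
    (hweight.fun_mul ((hAR.fun_pow 2).fun_add (hAT.fun_pow 2)))).congr_deriv ?_).deriv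
  simp only [Nat.add_one_sub_one, pow_one, Nat.cast_ofNat]
  field_simp
  ring

lemma pdT_energyFlux (hU : ContDiffAt ℝ 2 (uncurry U) (R, θ))
    (hA : ContDiffAt ℝ 2 (uncurry A) (R, θ)) :
    pdT (energyFlux b U A) R θ =
      2 * (pdT (pdR U) R θ * pdT U R θ + (pdR U R θ - b / R) * pdT (pdT U) R θ)
        + exp (4 * U R θ) / (2 * R ^ 2)
          * (4 * pdT U R θ * (pdR A R θ * pdT A R θ)
            + pdT (pdR A) R θ * pdT A R θ + pdR A R θ * pdT (pdT A) R θ) := by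
  have hU' := hasDerivAt_pdT (hU.differentiableAt two_ne_zero)
  have hUR := hasDerivAt_pdT (differentiableAt_pdR hU)
  have hUT := hasDerivAt_pdT (differentiableAt_pdT hU)
  have hAR := hasDerivAt_pdT (differentiableAt_pdR hA)
  have hAT := hasDerivAt_pdT (differentiableAt_pdT hA)
  refine (((((hUR.sub_const (b / R)).const_mul 2).fun_mul hUT).fun_add
    (((hU'.const_mul 4).exp.div_const (2 * R ^ 2)).fun_mul
      (hAR.fun_mul hAT))).congr_deriv ?_).deriv
  ring

lemma IsGowdySolutionAt.pdR_energyDensity_eq (h : IsGowdySolutionAt U A R θ) (hR : R ≠ 0)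
    (hU : ContDiffAt ℝ 2 (uncurry U) (R, θ)) (hA : ContDiffAt ℝ 2 (uncurry A) (R, θ)) :
    pdR (energyDensity b U A) R θ =
      pdT (energyFlux b U A) R θ - energyDissipation b U A R θ := by
  rw [pdR_energyDensity hR hU hA, pdT_energyFlux hU hA, h.pdR_pdR_U hR hU, h.pdR_pdR_A hR hA,
    pdR_pdT_comm hU, pdR_pdT_comm hA, energyDissipation]
  field_simp
  ring

lemma energyDissipation_nonneg (hb : b ∈ Icc (0 : ℝ) (1 / 2)) (hR : 0 < R) :
    0 ≤ energyDissipation b U A R θ := by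
  have hb₀ : 0 ≤ b := hb.1
  have hb₁ : 0 ≤ 1 - 2 * b := by linarith [hb.2]
  unfold energyDissipation
  positivity

end GowdyEnergy

theorem stmt5_general {R₀ T b : ℝ} (hR₀ : 0 < R₀) (hT : 0 ≤ T) (hb : b ∈ Icc (0 : ℝ) (1 / 2))
    {U A : ℝ → ℝ → ℝ}
    (hU : ∀ R, R₀ ≤ R → ∀ θ, ContDiffAt ℝ 2 (Function.uncurry U) (R, θ))
    (hA : ∀ R, R₀ ≤ R → ∀ θ, ContDiffAt ℝ 2 (Function.uncurry A) (R, θ))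
    (hUper : ∀ R, R₀ < R → Function.Periodic (U R) T)
    (hAper : ∀ R, R₀ < R → Function.Periodic (A R) T)
    (hsol : ∀ R, R₀ < R → ∀ θ, IsGowdySolutionAt U A R θ) :
    AntitoneOn (effectiveEnergy T b U A) (Ici R₀) := by
  refine antitoneOn_integral_of_pdR_le_pdT (F := energyFlux b U A) hT
    (fun R hR θ => contDiffAt_energyDensity (hR₀.trans_le hR).ne' (hU R hR θ) (hA R hR θ))
    (fun R hR => contDiff_iff_contDiffAt.2 fun θ =>
      contDiffAt_energyFlux (hU R hR.le θ) (hA R hR.le θ))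
    (fun R hR => periodic_energyFlux ((eventually_gt_nhds hR).mono hUper)
      ((eventually_gt_nhds hR).mono hAper)) fun R hR θ => ?_
  have hRpos : 0 < R := hR₀.trans hR
  rw [(hsol R hR θ).pdR_energyDensity_eq hRpos.ne' (hU R hR.le θ) (hA R hR.le θ)]
  exact sub_le_self _ (energyDissipation_nonneg hb hRpos)

theorem stmt5
    (R₀ : ℝ) (hR₀ : 0 < R₀)
    (U A : ℝ → ℝ → ℝ)
    (hU : ContDiff ℝ (⊤ : ℕ∞) (Function.uncurry U))
    (hA : ContDiff ℝ (⊤ : ℕ∞) (Function.uncurry A))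
    (hUper : ∀ R θ, U R (θ + 2 * π) = U R θ)
    (hAper : ∀ R θ, A R (θ + 2 * π) = A R θ)
    (eqU : ∀ R, R₀ ≤ R → ∀ θ : ℝ,
      deriv (fun r => r * pdR U r θ) R - deriv (fun t => R * pdT U R t) θ
        = exp (4 * U R θ) / (2 * R) * ((pdR A R θ) ^ 2 - (pdT A R θ) ^ 2))
    (eqA : ∀ R, R₀ ≤ R → ∀ θ : ℝ,
      deriv (fun r => r⁻¹ * pdR A r θ) R - deriv (fun t => R⁻¹ * pdT A R t) θ
        = 4 / R * (-(pdR U R θ * pdR A R θ) + pdT U R θ * pdT A R θ))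
    (Eb : ℝ → ℝ → ℝ)
    (hEb : ∀ b R, Eb b R = ∫ θ in (0:ℝ)..(2 * π),
      (pdR U R θ - b / R) ^ 2 + (pdT U R θ) ^ 2
        + exp (4 * U R θ) / (4 * R ^ 2) * ((pdR A R θ) ^ 2 + (pdT A R θ) ^ 2))
 :
    ∀ b ∈ Set.Icc (0:ℝ) (1/2),
      AntitoneOn (Eb b) (Set.Ici R₀) ∧ ∀ R, R₀ ≤ R → Eb b R ≤ Eb b R₀ := by
  intro b hb
  have hsmooth : (2 : WithTop ℕ∞) ≤ (⊤ : ℕ∞) := WithTop.coe_le_coe.2 le_top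
  have hanti : AntitoneOn (Eb b) (Ici R₀) :=
    (funext (hEb b) : Eb b = effectiveEnergy (2 * π) b U A) ▸
      stmt5_general hR₀ two_pi_pos.le hb (fun R _ θ => (hU.of_le hsmooth).contDiffAt)
        (fun R _ θ => (hA.of_le hsmooth).contDiffAt) (fun R _ => hUper R) (fun R _ => hAper R)
        fun R hR θ => ⟨eqU R hR.le θ, eqA R hR.le θ⟩
  exact ⟨hanti, fun R hR => hanti self_mem_Ici hR hR⟩
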